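/- The Hermitian unital design of order 4 — the 2-(65,5,1) design whose points are the 65 points of H = { [x : y : z] ∈ PG(2,16) : x⁵ + y⁵ + z⁵ = 0 } and whose blocks are the intersections H ∩ ℓ over lines ℓ of PG(2,16) meeting H in 5 points — has exactly 4304 parallel classes. -/

import Mathlib

noncomputable section

/-- The field `GF(16)` of 16 elements. -/
abbrev K16 := GaloisField 2 4

/-- The 3-dimensional vector space over `GF(16)`. -/
abbrev V16 := Fin 3 → K16

/-- The point set of the Desarguesian projective plane `PG(2,16)`:
1-dimensional subspaces of the 3-dimensional vector space over `GF(16)`. -/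
abbrev PG216 := Projectivization K16 V16

/-- The Hermitian set `H = { [x : y : z] ∈ PG(2,16) : x⁵ + y⁵ + z⁵ = 0 }`.
(The defining condition is invariant under scalar multiplication, so it may be
evaluated on the chosen representative of each point.) -/
def HermitianSet : Set PG216 :=
  {p | p.rep 0 ^ 5 + p.rep 1 ^ 5 + p.rep 2 ^ 5 = 0}
/-- The blocks of the Hermitian unital design: intersections of the Hermitian set with
lines of `PG(2,16)` meeting it in 5 points, viewed as subsets of the Hermitian set. -/
def hermitianBlocks : Set (Set ↥HermitianSet) :=
  {b | ∃ W : Submodule K16 V16, Module.finrank K16 W = 2 ∧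
        b = {x : ↥HermitianSet | x.1.submodule ≤ W} ∧ b.ncard = 5}

/-- For each point `i` (as the mask `2 ^ i`), the blocks whose smallest point is `i`. -/
def rowsL : List (ℕ × List ℕ) :=
  [(1, [4538852718936321, 549772656769, 144678138029294593, 283501396001, 324259177465774081,
  2392537302302725, 4611686018431590465, 2305845209377800193, 72062026444177411,
  585467951560294401, 1134696008253953, 2282749969, 1170935903384768513, 18446745173758052353,
  351860900757513, 9223389766480297985]), (2, [1125900175803394, 146366987906318346,
  565149515644930, 36063982464798722, 18451248223096930306, 146029019266, 1153202979584606274,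
  11529215046068740098, 275012141314, 88029649731586, 288239189424605186, 4620693217690517538,
  2214658562, 18015498054664198, 576601494086746130]), (4, [576462959916679172,
  2306124484727275780, 18446744075857044484, 5764607523051012612, 4521191814463620,
  72621110927032324, 35188671250468, 9011597435600900, 1196543528927252, 36037593179111428,
  288230513859100684, 144115256797433860, 9223372036863199236, 35434004548]), (8,
  [18518801667747611144, 36591747005972488, 68732060680, 2753074036808, 13835058064408969224,
  2305860603547238408, 149533715595304, 9008298767482888, 1152956963856842888,
  18014432869228568, 577586652277379080, 4503600701376520, 4398049132808]), (16,
  [4613937818241091600, 9223374253057901584, 4504699147390992, 567416719409200,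
  72066391204692112, 637665296, 18447025548705136656, 687195029776, 180143985363320848,
  2305878193585815632, 288247968341950992, 1161928712452046864]), (32, [139586474016,
  19599665612676399136, 576742227280266272, 36030996043270176, 18708877549600, 550292701728,
  9224497937835360544, 2308094809029476512, 4573968656760864, 162129586652446816,
  360287970190229536]), (64, [564049599529024, 9223380835095412800, 17592188208192,
  576465425227842112, 38280605422584128, 72057662774184000, 18446814579926237248,
  5629516714098752, 297237575943327808, 140737765179584]), (128, [288511851195539584,
  74766790952064, 9799832789162410112, 45036064993182336, 17850990720, 145241088016255104,
  18577354905354368, 4611687152298754432, 18446746272733335680]), (256, [18155135997871360,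
  580542139599104, 9009400429674752, 17213493504, 1224979103006851328, 144185556820042496,
  18446752870072058112, 864691128480301312]), (512, [141974441034240, 2251805182395904,
  18049583015791104, 9223935021167940096, 283674268434944, 25771115008, 2310346608875143680]),
  (1024, [6917529302518993920, 72092778444620800, 1441152430648591360, 9007233681591296,
  9904211362816, 40532534622159872]), (2048, [3458764651259561984, 576531672950900736,
  145144124807168, 4565510144, 281749859338240]), (4096, [72127962920521728, 2261145662533632,
  299071457988608, 17977344]), (8192, [576460822097698816, 39582955544576, 9570286663901184,
  4644611993772032, 73183502534746112, 1152923703663681536, 36028797162102784]), (16384,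
  [422246824886272, 18446748472829853696, 90072129994768384, 288300753487937536,
  9042383895543808, 1172526612480]), (32768, [290482210326216704, 274962087936,
  1152922604122832896, 4512400015458304, 4755801756259614720]), (65536, [9225623905522221056,
  19140298420846592, 18447307298549334016, 4611756388245504000]), (131072, [144117387107893248,
  1161634036973568, 2305843112561475584, 20266215503691776]), (262144, [4899916463332392960,
  108086393206734848, 576469548934103040]), (524288, [633318766280704, 175924025229312]),
  (1048576, [2305847957025456128, 9241386710245310464, 144255926106324992,
  4612812060069199872]), (2097152, [8830492606464, 1152921522870943744, 4616189618258182144]),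
  (4194304, [2341871823433498624, 562959889727488, 2256335370452992]), (8388608,
  [52785223565312, 70407944142848, 2533276979822592]), (16777216, [18031992322916352,
  1128133440831488, 9223376439246585856]), (33554432, [576478344925675520, 9148487606206464]),
  (67108864, [18446884897164361728, 9223373686457761792]), (134217728, [144396801699479552,
  20752587095942365184]), (268435456, [74309669534826496, 4611690436069687296]), (536870912,
  [1154047475917520896]), (1073741824, [288231753762471936]), (2147483648,
  [148618832800382976]), (4294967296, [153122683683340288]), (8589934592, [18296500551417856]),
  (17179869184, [576496125654073344]), (34359738368, [36047248198467584]), (68719476736,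
  [11476152614912]), (137438953472, []), (274877906944, []), (549755813888, []), (1099511627776,
  [3098477643142529024, 2360651464835072, 37441669460656128]), (2199023255552,
  [310754971358330880, 4683904141162971136]), (4398046511104, [1297067479008280576]),
  (8796093022208, [2332943771815116800, 4612574423822630912]), (17592186044416,
  [18459146564870864896]), (35184372088832, [28102496859163983872]), (70368744177664,
  [10412533444713119744]), (140737488355328, [2595902972714024960]), (281474976710656,
  [9309221904751525888]), (562949953421312, [1736700606304747520]), (1125899906842624, []),
  (2251799813685248, []), (4503599627370496, []), (9007199254740992, []), (18014398509481984,
  [23688934039968808960]), (36028797018963968, []), (72057594037927936, []),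
  (144115188075855872, []), (288230376151711744, []), (576460752303423488, []),
  (1152921504606846976, []), (2305843009213693952, []), (4611686018427387904, []),
  (9223372036854775808, []), (18446744073709551616, [])]

/-- Normalized coordinates of the 65 points of the Hermitian set. -/
def ptL : List (Fin 16 × Fin 16 × Fin 16) :=
  [(1, 6, 7), (1, 15, 0), (1, 14, 11), (1, 11, 6), (0, 1, 12), (1, 11, 9), (1, 2, 14), (1, 14,
  7), (1, 4, 11), (1, 7, 5), (1, 1, 0), (0, 1, 10), (1, 7, 4), (1, 9, 13), (0, 1, 1), (1, 13,
  6), (1, 9, 7), (1, 13, 14), (1, 3, 9), (1, 8, 0), (1, 14, 13), (1, 3, 5), (1, 13, 4), (1, 4,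
  3), (1, 4, 7), (1, 2, 6), (1, 6, 3), (1, 11, 4), (1, 10, 0), (1, 9, 11), (1, 6, 13), (1, 3,
  14), (1, 0, 8), (1, 5, 3), (1, 0, 12), (1, 7, 9), (1, 5, 13), (1, 2, 5), (1, 0, 15), (1, 5,
  7), (1, 13, 5), (1, 6, 2), (1, 9, 2), (1, 11, 14), (1, 14, 3), (1, 9, 3), (1, 2, 4), (1, 11,
  5), (1, 5, 11), (1, 7, 6), (1, 12, 0), (0, 1, 8), (1, 14, 2), (1, 0, 10), (1, 5, 2), (1, 3,
  6), (1, 3, 4), (1, 0, 1), (1, 4, 2), (1, 4, 13), (1, 13, 9), (1, 6, 11), (0, 1, 15), (1, 7,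
  14), (1, 2, 9)]

/-- The multiplication table of `GF(2)[t]/(t^4+t+1)`, four bits per entry. -/
def mulTable : ℕ :=
  116196760129267793630862849262464326346044543732748708940920453221664288556434379745879494961270582141731748813355742142288220638766218855867759359510984593843506004200114943278699875244065120512813025380665946106619127097398772031257643617143689515450995722003729973585221105779229319991106539050771048038400

/-- The intersections of the 273 lines with the Hermitian set, as masks. -/
def maskTbl : List ℕ :=
  [1125900175803394, 153122683683340288, 16384, 288511851195539584, 576462959916679172,
  18518801667747611144, 139586474016, 564049599529024, 4538852718936321, 4611686018427387904,
  10412533444713119744, 16, 18031992322916352, 2048, 2305847957025456128, 8830492606464,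
  2251799813685248, 4613937818241091600, 144115188075855872, 19599665612676399136,
  9223380835095412800, 576460822097698816, 2306124484727275780, 549772656769, 36591747005972488,
  274877906944, 310754971358330880, 17179869184, 141974441034240, 9007199254740992,
  72127962920521728, 52785223565312, 4294967296, 1024, 144678138029294593, 18155135997871360,
  68732060680, 74766790952064, 17592188208192, 18446744075857044484, 576742227280266272,
  6917529302518993920, 72092778444620800, 9223374253057901584, 1441152430648591360,
  9007233681591296, 9904211362816, 40532534622159872, 2251805182395904, 39582955544576,
  144396801699479552, 9799832789162410112, 5764607523051012612, 2097152, 72057594037927936,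
  36028797018963968, 4504699147390992, 283501396001, 2147483648, 18446884897164361728,
  580542139599104, 2332943771815116800, 290482210326216704, 262144, 2753074036808,
  4521191814463620, 3098477643142529024, 2261145662533632, 422246824886272, 137438953472,
  70368744177664, 33554432, 18049583015791104, 274962087936, 64, 1152921522870943744,
  13835058064408969224, 9009400429674752, 567416719409200, 18446744073709551616,
  324259177465774081, 1152922604122832896, 28102496859163983872, 8589934592, 18014398509481984,
  2305860603547238408, 36030996043270176, 4616189618258182144, 549755813888, 576465425227842112,
  2392537302302725, 17213493504, 68719476736, 9570286663901184, 281474976710656,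
  72066391204692112, 70407944142848, 149533715595304, 148618832800382976, 8388608,
  288230376151711744, 637665296, 18446748472829853696, 2360651464835072, 16777216,
  9241386710245310464, 3458764651259561984, 72621110927032324, 576460752303423488,
  45036064993182336, 256, 4611686018431590465, 299071457988608, 9223935021167940096,
  1297067479008280576, 67108864, 2199023255552, 38280605422584128, 4899916463332392960,
  90072129994768384, 1, 4644611993772032, 18447025548705136656, 17850990720, 1073741824,
  9008298767482888, 2305843009213693952, 576531672950900736, 35188671250468,
  2305845209377800193, 144255926106324992, 72057662774184000, 687195029776, 512, 4096,
  562949953421312, 288300753487937536, 1152956963856842888, 9223372036854775808, 18708877549600,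
  2533276979822592, 9011597435600900, 23688934039968808960, 34359738368, 4512400015458304, 2,
  146366987906318346, 565149515644930, 36063982464798722, 18451248223096930306, 146029019266,
  1153202979584606274, 11529215046068740098, 275012141314, 88029649731586, 288239189424605186,
  72062026444177411, 4620693217690517538, 2214658562, 18015498054664198, 576601494086746130,
  18446814579926237248, 144117387107893248, 17592186044416, 4503599627370496,
  4612574423822630912, 18014432869228568, 145144124807168, 128, 288231753762471936,
  550292701728, 2341871823433498624, 1048576, 585467951560294401, 4, 9225623905522221056,
  1224979103006851328, 1125899906842624, 145241088016255104, 37441669460656128,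
  73183502534746112, 1128133440831488, 1134696008253953, 9224497937835360544,
  1154047475917520896, 1196543528927252, 577586652277379080, 5629516714098752,
  19140298420846592, 18459146564870864896, 1161634036973568, 2595902972714024960,
  4612812060069199872, 18296500551417856, 144185556820042496, 2282749969, 2308094809029476512,
  1099511627776, 4194304, 32768, 4683904141162971136, 18447307298549334016, 131072,
  576496125654073344, 36037593179111428, 297237575943327808, 4503600701376520,
  1152921504606846976, 9223376439246585856, 268435456, 180143985363320848, 288230513859100684,
  576478344925675520, 1170935903384768513, 9223373686457761792, 2305843112561475584,
  18446752870072058112, 74309669534826496, 562959889727488, 4611690436069687296,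
  4573968656760864, 9042383895543808, 140737765179584, 283674268434944, 4565510144,
  864691128480301312, 144115256797433860, 4611756388245504000, 18446745173758052353,
  140737488355328, 134217728, 8, 2256335370452992, 36047248198467584, 8796093022208,
  25771115008, 2305878193585815632, 9309221904751525888, 1152923703663681536, 32,
  18577354905354368, 108086393206734848, 162129586652446816, 35184372088832, 4398046511104,
  9223372036863199236, 1736700606304747520, 288247968341950992, 65536, 11476152614912,
  4611687152298754432, 351860900757513, 8192, 9148487606206464, 536870912, 17977344,
  20752587095942365184, 524288, 4755801756259614720, 2310346608875143680, 633318766280704,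
  360287970190229536, 175924025229312, 576469548934103040, 35434004548, 281749859338240,
  36028797162102784, 20266215503691776, 18446746272733335680, 1161928712452046864,
  9223389766480297985, 4398049132808, 1172526612480]

/-- The list of all blocks, as bit masks. -/
def blkL : List ℕ := rowsL.flatMap Prod.snd

@[reducible] def tryAll (f : ℕ → ℕ) (U : ℕ) (l : List ℕ) : ℕ :=
  List.rec 0 (fun b _ ih => Nat.rec (Nat.add (f (Nat.lor U b)) ih) (fun _ _ => ih) (Nat.land b U)) l

@[reducible] def cnt (l : List (ℕ × List ℕ)) : ℕ → ℕ :=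
  List.rec (fun _ => 1)
    (fun pl _ ih U => Nat.rec (tryAll ih U pl.2) (fun _ _ => ih U) (Nat.land pl.1 U)) l

theorem cnt_rowsL : cnt rowsL 0 = 4304 := by decide +kernel

theorem natRec_eq_ite (a b n : ℕ) :
    (Nat.rec a (fun _ _ => b) n : ℕ) = if n = 0 then a else b := by
  cases n <;> simp

theorem tryAll_cons (f : ℕ → ℕ) (U b : ℕ) (l : List ℕ) :
    tryAll f U (b :: l) = if b &&& U = 0 then f (U ||| b) + tryAll f U l else tryAll f U l :=
  natRec_eq_ite _ _ _

theorem cnt_cons (p : ℕ) (l : List ℕ) (r : List (ℕ × List ℕ)) (U : ℕ) :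
    cnt ((p, l) :: r) U = if p &&& U = 0 then tryAll (cnt r) U l else cnt r U :=
  natRec_eq_ite _ _ _

theorem tryAll_eq_sum (f : ℕ → ℕ) (U : ℕ) (l : List ℕ) (hl : l.Nodup) :
    tryAll f U l = ∑ m ∈ l.toFinset.filter (fun m => m &&& U = 0), f (U ||| m) := by
  induction l with
  | nil => rfl
  | cons b l ih =>
    rw [tryAll_cons, ih hl.of_cons]
    have hb : b ∉ l := (List.nodup_cons.1 hl).1
    rw [List.toFinset_cons, Finset.filter_insert]
    split_ifs with h
    · rw [Finset.sum_insert]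
      simp [hb]
    · rfl

theorem land_eq_zero_iff (a b : ℕ) :
    a &&& b = 0 ↔ ∀ i, ¬ (a.testBit i = true ∧ b.testBit i = true) := by
  constructor
  · intro h i
    have := congrArg (fun n => Nat.testBit n i) h
    simpa using this
  · intro h
    apply Nat.eq_of_testBit_eq
    intro i
    have := h i
    simpa using this

/-- `T` is a set of pairwise disjoint blocks partitioning the complement of `U`. -/
def IsSol (U : ℕ) (T : Finset ℕ) : Prop :=
  (∀ m ∈ T, m ∈ blkL ∧ m &&& U = 0) ∧ (∀ m ∈ T, ∀ m' ∈ T, m ≠ m' → m &&& m' = 0) ∧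
    ∀ i < 65, U.testBit i = true ∨ ∃ m ∈ T, m.testBit i = true

open Classical in
def solF (U : ℕ) : Finset (Finset ℕ) := blkL.toFinset.powerset.filter (IsSol U)

theorem mem_solF (U : ℕ) (T : Finset ℕ) : T ∈ solF U ↔ IsSol U T := by
  unfold solF
  simp only [Finset.mem_filter, Finset.mem_powerset, and_iff_right_iff_imp]
  intro h m hm
  simpa using (h.1 m hm).1

def GoodRows : ℕ → List (ℕ × List ℕ) → Prop
  | k, [] => k = 65
  | k, (p, l) :: r => k < 65 ∧ p = 2 ^ k ∧ l.Nodup ∧ (∀ m ∈ l, m ∈ blkL ∧ m.testBit k = true) ∧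
      (∀ m ∈ blkL, m.testBit k = true → m % 2 ^ k ≠ 0 ∨ m ∈ l) ∧ GoodRows (k + 1) r

instance decGoodRows : ∀ k l, Decidable (GoodRows k l)
  | k, [] => inferInstanceAs (Decidable (k = 65))
  | k, (p, l) :: r => by
    have := decGoodRows (k + 1) r
    unfold GoodRows
    infer_instance

theorem goodRows_rowsL : GoodRows 0 rowsL := by decide +kernel

theorem blkL_lt : ∀ m ∈ blkL, m < 2 ^ 65 := by decide +kernel

theorem two_pow_land_eq_zero (k U : ℕ) : 2 ^ k &&& U = 0 ↔ ¬ U.testBit k = true := by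
  rw [land_eq_zero_iff]
  constructor
  · intro h h'
    exact h k ⟨Nat.testBit_two_pow_self, h'⟩
  · rintro h i ⟨h1, h2⟩
    rw [Nat.testBit_two_pow] at h1
    simp only [decide_eq_true_eq] at h1
    subst h1
    exact h h2

theorem card_solF (r : List (ℕ × List ℕ)) : ∀ (k U : ℕ), GoodRows k r →
    (∀ i < k, U.testBit i = true) → (solF U).card = cnt r U := by
  classical
  induction r with
  | nil =>
    intro k U hk hU
    have hk : k = 65 := hk
    subst hk
    have : solF U = {∅} := by
      ext T
      rw [mem_solF, Finset.mem_singleton]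
      constructor
      · intro h
        by_contra hne
        obtain ⟨m, hm⟩ := Finset.nonempty_iff_ne_empty.2 hne
        obtain ⟨hb, hd⟩ := h.1 m hm
        have hlt := blkL_lt m hb
        have h0 : m = 0 := by
          apply Nat.eq_of_testBit_eq
          intro i
          rw [Nat.zero_testBit]
          by_cases hi : i < 65
          · have := (land_eq_zero_iff _ _).1 hd i
            simpa [hU i hi] using this
          · exact Nat.testBit_lt_two_pow (lt_of_lt_of_le hlt (Nat.pow_le_pow_right (by norm_num) (by omega)))
        subst h0
        revert hb
        decide +kernel
      · rintro rfl
        exact ⟨by simp, by simp, fun i hi => Or.inl (hU i hi)⟩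
    rw [this]
    rfl
  | cons pl r ih =>
    obtain ⟨p, l⟩ := pl
    rintro k U ⟨hk, rfl, hnd, hl, hbl, hr⟩ hU
    rw [cnt_cons]
    split_ifs with hc
    · rw [two_pow_land_eq_zero] at hc
      rw [tryAll_eq_sum _ _ _ hnd]
      have key : solF U = (l.toFinset.filter (fun m => m &&& U = 0)).biUnion
          (fun m => (solF (U ||| m)).image (insert m)) := by
        ext T
        simp only [Finset.mem_biUnion, Finset.mem_filter, List.mem_toFinset, Finset.mem_image,
          mem_solF]
        constructor
        · intro h
          obtain ⟨m, hmT, hmk⟩ := (h.2.2 k hk).resolve_left hc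
          obtain ⟨hmb, hmU⟩ := h.1 m hmT
          have hml : m ∈ l := by
            refine (hbl m hmb hmk).resolve_left ?_
            rw [not_not]
            apply Nat.eq_of_testBit_eq
            intro i
            rw [Nat.testBit_mod_two_pow, Nat.zero_testBit]
            by_cases hi : i < k
            · have := (land_eq_zero_iff _ _).1 hmU i
              simpa [hi, hU i hi] using this
            · simp [hi]
          refine ⟨m, ⟨hml, hmU⟩, T.erase m, ⟨?_, ?_, ?_⟩, Finset.insert_erase hmT⟩
          · intro m' hm'
            rw [Finset.mem_erase] at hm'
            refine ⟨(h.1 m' hm'.2).1, ?_⟩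
            rw [Nat.and_or_distrib_left, (h.1 m' hm'.2).2, h.2.1 m' hm'.2 m hmT hm'.1]
            rfl
          · intro a ha b hb
            exact h.2.1 a (Finset.mem_of_mem_erase ha) b (Finset.mem_of_mem_erase hb)
          · intro i hi
            rw [Nat.testBit_or, Bool.or_eq_true]
            rcases h.2.2 i hi with h' | ⟨m', hm', hb⟩
            · exact Or.inl (Or.inl h')
            · by_cases hmm : m' = m
              · subst hmm
                exact Or.inl (Or.inr hb)
              · exact Or.inr ⟨m', Finset.mem_erase.2 ⟨hmm, hm'⟩, hb⟩
        · rintro ⟨m, ⟨hml, hmU⟩, T, h, rfl⟩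
          have h1 : ∀ a ∈ T, a &&& U = 0 ∧ a &&& m = 0 := by
            intro a ha
            have := (h.1 a ha).2
            rw [Nat.and_or_distrib_left, Nat.or_eq_zero_iff] at this
            exact this
          refine ⟨?_, ?_, ?_⟩
          · intro a ha
            rw [Finset.mem_insert] at ha
            rcases ha with rfl | ha
            · exact ⟨(hl _ hml).1, hmU⟩
            · exact ⟨(h.1 a ha).1, (h1 a ha).1⟩
          · intro a ha b hb hab
            rw [Finset.mem_insert] at ha hb
            rcases ha with rfl | ha <;> rcases hb with rfl | hb
            · exact absurd rfl hab
            · rw [Nat.and_comm]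
              exact (h1 b hb).2
            · exact (h1 a ha).2
            · exact h.2.1 a ha b hb hab
          · intro i hi
            rcases h.2.2 i hi with h' | ⟨m', hm', hb⟩
            · rw [Nat.testBit_or, Bool.or_eq_true] at h'
              rcases h' with h' | h'
              · exact Or.inl h'
              · exact Or.inr ⟨m, Finset.mem_insert_self _ _, h'⟩
            · exact Or.inr ⟨m', Finset.mem_insert_of_mem hm', hb⟩
      rw [key, Finset.card_biUnion]
      · apply Finset.sum_congr rfl
        intro m hm
        rw [Finset.mem_filter, List.mem_toFinset] at hm
        rw [Finset.card_image_of_injOn]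
        · apply ih (k + 1) _ hr
          intro i hi
          rw [Nat.testBit_or, Bool.or_eq_true]
          rcases Nat.lt_succ_iff_lt_or_eq.1 hi with hi | rfl
          · exact Or.inl (hU i hi)
          · exact Or.inr (hl m hm.1).2
        · have hnot : ∀ T ∈ solF (U ||| m), m ∉ T := by
            intro T hT hmT
            rw [mem_solF] at hT
            have := (land_eq_zero_iff _ _).1 (hT.1 m hmT).2 k
            simp [(hl m hm.1).2] at this
          intro T hT T' hT' hTT
          have h1 := hnot T hT
          have h2 := hnot T' hT'
          have hTT : insert m T = insert m T' := hTT
          rw [← Finset.erase_insert h1, ← Finset.erase_insert h2, hTT]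
      · intro m hm m' hm' hne
        rw [Function.onFun, Finset.disjoint_left]
        intro T hT hT'
        simp only [Finset.coe_filter, List.mem_toFinset, Set.mem_ofPred_eq] at hm hm'
        have hTU : T ∈ solF U := by
          rw [key, Finset.mem_biUnion]
          exact ⟨m, by simpa using hm, hT⟩
        rw [Finset.mem_image] at hT hT'
        obtain ⟨T1, -, rfl⟩ := hT
        obtain ⟨T2, -, hT2⟩ := hT'
        rw [mem_solF] at hTU
        have := hTU.2.1 m (Finset.mem_insert_self _ _) m'
          (by rw [← hT2]; exact Finset.mem_insert_self _ _) hne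
        exact (land_eq_zero_iff _ _).1 this k ⟨(hl m hm.1).2, (hl m' hm'.1).2⟩
    · rw [two_pow_land_eq_zero, not_not] at hc
      apply ih (k + 1) U hr
      intro i hi
      rcases Nat.lt_succ_iff_lt_or_eq.1 hi with hi | rfl
      · exact hU i hi
      · exact hc

theorem card_solF_zero : (solF 0).card = 4304 := by
  rw [card_solF rowsL 0 0 goodRows_rowsL (by simp), cnt_rowsL]

def fadd (a b : Fin 16) : Fin 16 := ⟨(a.1 ^^^ b.1) % 16, Nat.mod_lt _ (by norm_num)⟩

def fmul (a b : Fin 16) : Fin 16 :=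
  ⟨(mulTable >>> (4 * (16 * a.1 + b.1))) % 16, Nat.mod_lt _ (by norm_num)⟩

/-- `a ^ 14`, the inverse of `a` in the concrete field of 16 elements. -/
def finv (a : Fin 16) : Fin 16 :=
  let b := fmul a a
  let c := fmul b b
  let d := fmul c c
  fmul b (fmul c d)

theorem fadd_assoc : ∀ a b c, fadd (fadd a b) c = fadd a (fadd b c) := by decide +kernel
theorem fadd_comm : ∀ a b, fadd a b = fadd b a := by decide +kernel
theorem fzero_add : ∀ a, fadd 0 a = a := by decide +kernel
theorem fadd_self : ∀ a, fadd a a = 0 := by decide +kernel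
theorem fmul_assoc : ∀ a b c, fmul (fmul a b) c = fmul a (fmul b c) := by decide +kernel
theorem fmul_comm : ∀ a b, fmul a b = fmul b a := by decide +kernel
theorem fone_mul : ∀ a, fmul 1 a = a := by decide +kernel
theorem fzero_mul : ∀ a, fmul 0 a = 0 := by decide +kernel
theorem fmul_add : ∀ a b c, fmul a (fadd b c) = fadd (fmul a b) (fmul a c) := by decide +kernel
theorem fmul_inv : ∀ a, a ≠ 0 → fmul a (finv a) = 1 := by decide +kernel

/-- The concrete field of 16 elements. -/
structure F16 : Type where
  v : Fin 16

def f16Equiv : F16 ≃ Fin 16 := ⟨F16.v, F16.mk, fun _ => rfl, fun _ => rfl⟩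

instance : Fintype F16 := Fintype.ofEquiv _ f16Equiv.symm

instance : Add F16 := ⟨fun a b => ⟨fadd a.v b.v⟩⟩
instance : Mul F16 := ⟨fun a b => ⟨fmul a.v b.v⟩⟩
instance : Zero F16 := ⟨⟨0⟩⟩
instance : One F16 := ⟨⟨1⟩⟩
instance : Neg F16 := ⟨fun a => a⟩
instance : Inv F16 := ⟨fun a => ⟨finv a.v⟩⟩

theorem f16_mul_comm (a b : F16) : a * b = b * a := congrArg F16.mk (fmul_comm a.v b.v)
theorem f16_add_comm (a b : F16) : a + b = b + a := congrArg F16.mk (fadd_comm a.v b.v)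
theorem f16_mul_add (a b c : F16) : a * (b + c) = a * b + a * c :=
  congrArg F16.mk (fmul_add a.v b.v c.v)
theorem f16_one_mul (a : F16) : 1 * a = a := congrArg F16.mk (fone_mul a.v)
theorem f16_zero_mul (a : F16) : 0 * a = 0 := congrArg F16.mk (fzero_mul a.v)
theorem f16_zero_add (a : F16) : 0 + a = a := congrArg F16.mk (fzero_add a.v)

instance fieldF16 : Field F16 where
  add_assoc a b c := congrArg F16.mk (fadd_assoc a.v b.v c.v)
  zero_add := f16_zero_add
  add_zero a := (f16_add_comm a 0).trans (f16_zero_add a)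
  add_comm := f16_add_comm
  neg_add_cancel a := congrArg F16.mk (fadd_self a.v)
  mul_assoc a b c := congrArg F16.mk (fmul_assoc a.v b.v c.v)
  one_mul := f16_one_mul
  mul_one a := (f16_mul_comm a 1).trans (f16_one_mul a)
  zero_mul := f16_zero_mul
  mul_zero a := (f16_mul_comm a 0).trans (f16_zero_mul a)
  left_distrib := f16_mul_add
  right_distrib a b c := by
    rw [f16_mul_comm, f16_mul_add, f16_mul_comm c a, f16_mul_comm c b]
  mul_comm := f16_mul_comm
  exists_pair_ne := ⟨0, 1, fun h => absurd (congrArg F16.v h) (by decide +kernel)⟩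
  mul_inv_cancel a ha := congrArg F16.mk (fmul_inv a.v (fun h => ha (congrArg F16.mk h)))
  inv_zero := congrArg F16.mk (by decide +kernel : finv 0 = 0)
  nsmul := nsmulRec
  zsmul := zsmulRec
  nnqsmul := _
  nnqsmul_def := fun _ _ => rfl
  qsmul := _
  qsmul_def := fun _ _ => rfl

theorem card_F16_K16 : Fintype.card F16 = Nat.card K16 := by
  rw [GaloisField.card 2 4 (by norm_num), Fintype.card_congr f16Equiv, Fintype.card_fin]
  norm_num

instance : Fintype K16 := Fintype.ofFinite _

/-- An isomorphism between the concrete field and `GF(16)`. -/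
def phi : F16 ≃+* K16 :=
  FiniteField.ringEquivOfCardEq (card_F16_K16.trans Nat.card_eq_fintype_card)

def phi' (a : Fin 16) : K16 := phi ⟨a⟩

theorem phi'_add (a b : Fin 16) : phi' (fadd a b) = phi' a + phi' b := by
  have h : (⟨fadd a b⟩ : F16) = ⟨a⟩ + ⟨b⟩ := rfl
  unfold phi'
  rw [h, map_add]
theorem phi'_mul (a b : Fin 16) : phi' (fmul a b) = phi' a * phi' b := by
  have h : (⟨fmul a b⟩ : F16) = ⟨a⟩ * ⟨b⟩ := rfl
  unfold phi'
  rw [h, map_mul]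
theorem phi'_zero : phi' 0 = 0 := map_zero phi
theorem phi'_one : phi' 1 = 1 := map_one phi
theorem phi'_inj {a b : Fin 16} : phi' a = phi' b ↔ a = b := 
  phi.injective.eq_iff.trans ⟨fun h => congrArg F16.v h, fun h => congrArg F16.mk h⟩
theorem phi'_surj (x : K16) : ∃ a, phi' a = x :=
  let ⟨a, ha⟩ := phi.surjective x
  ⟨a.v, ha⟩
theorem phi'_eq_zero {a : Fin 16} : phi' a = 0 ↔ a = 0 := by rw [← phi'_zero, phi'_inj]
theorem phi'_eq_one {a : Fin 16} : phi' a = 1 ↔ a = 1 := by rw [← phi'_one, phi'_inj]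

abbrev T16 := Fin 16 × Fin 16 × Fin 16

def toV (p : T16) : V16 := ![phi' p.1, phi' p.2.1, phi' p.2.2]

def fpow5 (a : Fin 16) : Fin 16 :=
  let b := fmul a a
  fmul (fmul b b) a

def fdot (a p : T16) : Fin 16 :=
  fadd (fadd (fmul a.1 p.1) (fmul a.2.1 p.2.1)) (fmul a.2.2 p.2.2)

def fherm (p : T16) : Fin 16 := fadd (fadd (fpow5 p.1) (fpow5 p.2.1)) (fpow5 p.2.2)

abbrev FNorm (p : T16) : Prop := p.1 = 1 ∨ (p.1 = 0 ∧ p.2.1 = 1) ∨ (p.1 = 0 ∧ p.2.1 = 0 ∧ p.2.2 = 1)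

def KNorm (v : V16) : Prop := v 0 = 1 ∨ (v 0 = 0 ∧ v 1 = 1) ∨ (v 0 = 0 ∧ v 1 = 0 ∧ v 2 = 1)

def kdot (a v : V16) : K16 := a 0 * v 0 + a 1 * v 1 + a 2 * v 2

def kherm (v : V16) : K16 := v 0 ^ 5 + v 1 ^ 5 + v 2 ^ 5

theorem toV_inj {p q : T16} (h : toV p = toV q) : p = q := by
  have h0 := congrFun h 0
  have h1 := congrFun h 1
  have h2 := congrFun h 2
  simp only [toV, Matrix.cons_val] at h0 h1 h2
  rw [phi'_inj] at h0 h1 h2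
  exact Prod.ext h0 (Prod.ext h1 h2)

theorem toV_surj (v : V16) : ∃ p, toV p = v := by
  obtain ⟨a, ha⟩ := phi'_surj (v 0)
  obtain ⟨b, hb⟩ := phi'_surj (v 1)
  obtain ⟨c, hc⟩ := phi'_surj (v 2)
  refine ⟨(a, b, c), ?_⟩
  ext i
  fin_cases i <;> simp [toV, ha, hb, hc]

theorem kNorm_toV (p : T16) : KNorm (toV p) ↔ FNorm p := by
  simp only [KNorm, toV, FNorm, Matrix.cons_val, phi'_eq_zero, phi'_eq_one]

theorem kdot_toV (a p : T16) : kdot (toV a) (toV p) = phi' (fdot a p) := by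
  simp only [kdot, toV, fdot, Matrix.cons_val, phi'_add, phi'_mul]

theorem kherm_toV (p : T16) : kherm (toV p) = phi' (fherm p) := by
  simp only [kherm, toV, fherm, fpow5, Matrix.cons_val, phi'_add, phi'_mul]
  ring

theorem KNorm.ne_zero {v : V16} (h : KNorm v) : v ≠ 0 := by
  rintro rfl
  simp [KNorm] at h

theorem exists_norm (v : V16) (hv : v ≠ 0) : ∃ c : K16, c ≠ 0 ∧ KNorm (c • v) := by
  by_cases h0 : v 0 = 0
  · by_cases h1 : v 1 = 0
    · have h2 : v 2 ≠ 0 := by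
        intro h2
        apply hv
        ext i
        fin_cases i <;> simp [h0, h1, h2]
      exact ⟨(v 2)⁻¹, inv_ne_zero h2, Or.inr (Or.inr (by simp [h0, h1, h2]))⟩
    · exact ⟨(v 1)⁻¹, inv_ne_zero h1, Or.inr (Or.inl (by simp [h0, h1]))⟩
  · exact ⟨(v 0)⁻¹, inv_ne_zero h0, Or.inl (by simp [h0])⟩

theorem norm_unique (v w : V16) (hv : KNorm v) (hw : KNorm w) (a : K16) (h : a • w = v) :
    v = w := by
  have ha : a ≠ 0 := by
    rintro rfl
    apply hv.ne_zero
    rw [← h, zero_smul]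
  subst h
  have : a = 1 := by
    rcases hv with h | ⟨h, h'⟩ | ⟨h, h', h''⟩ <;> rcases hw with g | ⟨g, g'⟩ | ⟨g, g', g''⟩ <;>
      simp_all [Pi.smul_apply]
  rw [this, one_smul]

theorem kherm_smul (c : K16) (v : V16) : kherm (c • v) = c ^ 5 * kherm v := by
  simp only [kherm, Pi.smul_apply, smul_eq_mul]
  ring

theorem mk_mem_hermitian (v : V16) (hv : v ≠ 0) :
    Projectivization.mk K16 v hv ∈ HermitianSet ↔ kherm v = 0 := by
  obtain ⟨a, ha⟩ := Projectivization.exists_smul_eq_mk_rep K16 v hv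
  change kherm (Projectivization.mk K16 v hv).rep = 0 ↔ _
  rw [← ha, Units.smul_def, kherm_smul, mul_eq_zero]
  simp

/-- All normalized coordinates. -/
def normL : List T16 :=
  (0, 0, 1) :: ((List.finRange 16).map (fun c => (0, 1, c)) ++
    (List.finRange 16).flatMap (fun b => (List.finRange 16).map (fun c => (1, b, c))))

theorem mem_normL (a : T16) : a ∈ normL ↔ FNorm a := by
  obtain ⟨x, y, z⟩ := a
  simp only [normL, FNorm, List.mem_cons, List.mem_append, List.mem_map, List.mem_flatMap,
    List.mem_finRange, true_and, Prod.mk.injEq]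
  constructor
  · rintro (⟨h1, h2, h3⟩ | ⟨c, h1, h2, h3⟩ | ⟨b, c, h1, h2, h3⟩)
    · exact Or.inr (Or.inr ⟨h1, h2, h3⟩)
    · exact Or.inr (Or.inl ⟨h1.symm, h2.symm⟩)
    · exact Or.inl h1.symm
  · rintro (h | ⟨h1, h2⟩ | ⟨h1, h2, h3⟩)
    · exact Or.inr (Or.inr ⟨y, z, h.symm, rfl, rfl⟩)
    · exact Or.inr (Or.inl ⟨z, h1.symm, h2.symm, rfl⟩)
    · exact Or.inl ⟨h1, h2, h3⟩

theorem ptL_length : ptL.length = 65 := by decide +kernel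
theorem ptL_nodup : ptL.Nodup := by decide +kernel
theorem ptL_check1 : ptL.all (fun p => decide (p ∈ normL) && decide (fherm p = 0)) = true := by
  decide +kernel
theorem ptL_check2 : normL.all (fun p => !decide (fherm p = 0) || decide (p ∈ ptL)) = true := by
  decide +kernel
theorem ptL_norm : ∀ p ∈ ptL, p ∈ normL ∧ fherm p = 0 := by
  have h := ptL_check1
  rw [List.all_eq_true] at h
  intro p hp
  have h' := h p hp
  rw [Bool.and_eq_true, decide_eq_true_eq, decide_eq_true_eq] at h'
  exact h'
theorem ptL_complete : ∀ p ∈ normL, fherm p = 0 → p ∈ ptL := by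
  have h := ptL_check2
  rw [List.all_eq_true] at h
  intro p hp hp0
  have h' := h p hp
  rw [decide_eq_true hp0, Bool.not_true, Bool.false_or, decide_eq_true_eq] at h'
  exact h'

def pt (i : Fin 65) : T16 := ptL[i.1]'(by rw [ptL_length]; exact i.2)

theorem pt_mem (i : Fin 65) : pt i ∈ ptL := List.getElem_mem _

theorem pt_kNorm (i : Fin 65) : KNorm (toV (pt i)) := 
  (kNorm_toV _).2 ((mem_normL _).1 (ptL_norm _ (pt_mem i)).1)

theorem pt_kherm (i : Fin 65) : kherm (toV (pt i)) = 0 := by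
  rw [kherm_toV, (ptL_norm _ (pt_mem i)).2, phi'_zero]

theorem pt_inj : Function.Injective pt := by
  intro i j h
  exact Fin.ext ((List.Nodup.getElem_inj_iff ptL_nodup).1 h)

def eFun (i : Fin 65) : ↥HermitianSet :=
  ⟨Projectivization.mk K16 (toV (pt i)) (pt_kNorm i).ne_zero,
    (mk_mem_hermitian _ _).2 (pt_kherm i)⟩

theorem eFun_bij : Function.Bijective eFun := by
  constructor
  · intro i j h
    have h := congrArg Subtype.val h
    simp only [eFun] at h
    rw [Projectivization.mk_eq_mk_iff'] at h
    obtain ⟨a, ha⟩ := h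
    exact pt_inj (toV_inj (norm_unique _ _ (pt_kNorm i) (pt_kNorm j) a ha))
  · rintro ⟨p, hp⟩
    induction p using Projectivization.ind with
    | h v hv =>
      have hp' := (mk_mem_hermitian v hv).1 hp
      obtain ⟨c, hc, hn⟩ := exists_norm v hv
      obtain ⟨⟨x, y, z⟩, hq⟩ := toV_surj (c • v)
      have h1 : FNorm (x, y, z) := by rw [← kNorm_toV, hq]; exact hn
      have h2 : fherm (x, y, z) = 0 := by
        rw [← phi'_eq_zero, ← kherm_toV, hq, kherm_smul, hp', mul_zero]
      obtain ⟨i, hi, hi'⟩ := List.getElem_of_mem (ptL_complete _ ((mem_normL _).2 h1) h2)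
      refine ⟨⟨i, by rw [← ptL_length]; exact hi⟩, ?_⟩
      apply Subtype.ext
      simp only [eFun]
      rw [Projectivization.mk_eq_mk_iff']
      refine ⟨c, ?_⟩
      rw [← hq, ← hi']
      rfl

def ePt : Fin 65 ≃ ↥HermitianSet := Equiv.ofBijective eFun eFun_bij

theorem ePt_le (i : Fin 65) (W : Submodule K16 V16) :
    (ePt i).1.submodule ≤ W ↔ toV (pt i) ∈ W := by
  change (Projectivization.mk K16 (toV (pt i)) _).submodule ≤ W ↔ _
  rw [Projectivization.submodule_mk, Submodule.span_singleton_le_iff_mem]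

def kdotL (a : V16) : V16 →ₗ[K16] K16 where
  toFun := kdot a
  map_add' v w := by simp only [kdot, Pi.add_apply]; ring
  map_smul' c v := by simp only [kdot, Pi.smul_apply, smul_eq_mul, RingHom.id_apply]; ring

theorem finrank_ker (f : V16 →ₗ[K16] K16) (hf : f ≠ 0) :
    Module.finrank K16 (LinearMap.ker f) = 2 := by
  have h := LinearMap.finrank_range_add_finrank_ker f
  have h1 : Module.finrank K16 (LinearMap.range f) = 1 := by
    rw [LinearMap.range_eq_top.2 (LinearMap.surjective hf), finrank_top, Module.finrank_self]
  rw [h1, Module.finrank_fin_fun] at h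
  omega

theorem kdotL_ne_zero (a : V16) (ha : a ≠ 0) : kdotL a ≠ 0 := by
  intro h
  apply ha
  ext i
  have := LinearMap.congr_fun h (Pi.single i 1)
  fin_cases i <;> simpa [kdotL, kdot] using this

theorem functional_eq (f : V16 →ₗ[K16] K16) : ∃ a, f = kdotL a := by
  refine ⟨fun i => f (Pi.single i 1), ?_⟩
  apply LinearMap.pi_ext'
  intro i
  ext
  fin_cases i <;> simp [kdotL, kdot]

theorem line_eq (W : Submodule K16 V16) :
    Module.finrank K16 W = 2 ↔ ∃ a : T16, FNorm a ∧ ∀ v, v ∈ W ↔ kdot (toV a) v = 0 := by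
  constructor
  · intro h
    have hlt : W < ⊤ := by
      rw [lt_top_iff_ne_top]
      rintro rfl
      rw [finrank_top, Module.finrank_fin_fun] at h
      omega
    obtain ⟨f, hf, hW⟩ := Submodule.exists_le_ker_of_lt_top W hlt
    have hWe : W = LinearMap.ker f :=
      Submodule.eq_of_le_of_finrank_eq hW (by rw [h, finrank_ker f hf])
    obtain ⟨a, rfl⟩ := functional_eq f
    have ha : a ≠ 0 := by
      rintro rfl
      apply hf
      ext
      simp [kdotL, kdot]
    obtain ⟨c, hc, hn⟩ := exists_norm a ha
    obtain ⟨q, hq⟩ := toV_surj (c • a)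
    refine ⟨q, by rw [← kNorm_toV, hq]; exact hn, ?_⟩
    intro v
    rw [hWe, hq, LinearMap.mem_ker]
    change kdot a v = 0 ↔ _
    have : kdot (c • a) v = c * kdot a v := by
      simp only [kdot, Pi.smul_apply, smul_eq_mul]; ring
    rw [this, mul_eq_zero]
    simp [hc]
  · rintro ⟨a, ha, h⟩
    have : W = LinearMap.ker (kdotL (toV a)) := by
      ext v
      rw [h, LinearMap.mem_ker]
      rfl
    rw [this]
    exact finrank_ker _ (kdotL_ne_zero _ ((kNorm_toV a).2 ha).ne_zero)

/-- The mask of the points of a list lying on the line with coordinates `a`. -/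
def maskL (a : T16) : List T16 → ℕ
  | [] => 0
  | p :: l => (fdot a p == 0).toNat + 2 * maskL a l

theorem testBit_maskL (a : T16) (l : List T16) (i : ℕ) (hi : i < l.length) :
    (maskL a l).testBit i = true ↔ fdot a l[i] = 0 := by
  induction l generalizing i with
  | nil => simp at hi
  | cons p l ih =>
    cases i with
    | zero =>
      rw [maskL, Nat.testBit_zero]
      by_cases h : fdot a p = 0
      · simp [h]
      · have h' : (fdot a p == 0) = false := by simpa using h
        simp [h, h']
    | succ i =>
      have : (maskL a (p :: l)) / 2 = maskL a l := by
        rw [maskL]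
        have := Bool.toNat_le (fdot a p == 0)
        omega
      rw [Nat.testBit_succ, this, List.getElem_cons_succ]
      exact ih i (by simpa using hi)

theorem masks_eq : normL.map (fun a => maskL a ptL) = maskTbl := by decide +kernel

theorem mask_complete : ∀ m ∈ maskTbl,
    m ∈ blkL ∨ m ∈ rowsL.map Prod.fst := by decide +kernel

theorem blk_sub_mask : ∀ m ∈ blkL, m ∈ maskTbl := by decide +kernel

theorem fst_pow : ∀ m ∈ rowsL.map Prod.fst, m ∈ (List.range 65).map (fun k => 2 ^ k) := by
  decide +kernel

/-- The points with bits in the mask `m`. -/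
def bitsF (m : ℕ) : Finset (Fin 65) := Finset.univ.filter (fun i => m.testBit i.1 = true)

theorem card_bitsF : ∀ m ∈ blkL, (bitsF m).card = 5 := by decide +kernel

/-- The block of the unital given by the mask `m`. -/
def gBlk (m : ℕ) : Set ↥HermitianSet := ePt '' (bitsF m : Set (Fin 65))

theorem mem_gBlk (m : ℕ) (i : Fin 65) : ePt i ∈ gBlk m ↔ m.testBit i.1 = true := by
  unfold gBlk
  rw [ePt.injective.mem_set_image]
  simp [bitsF]

theorem ncard_gBlk (m : ℕ) : (gBlk m).ncard = (bitsF m).card := by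
  unfold gBlk
  rw [Set.ncard_image_of_injective _ ePt.injective, Set.ncard_coe_finset]

theorem line_gBlk (W : Submodule K16 V16) (a : T16) (h : ∀ v, v ∈ W ↔ kdot (toV a) v = 0) :
    {x : ↥HermitianSet | x.1.submodule ≤ W} = gBlk (maskL a ptL) := by
  ext x
  obtain ⟨i, rfl⟩ := ePt.surjective x
  rw [mem_gBlk, testBit_maskL a ptL i.1 (by rw [ptL_length]; exact i.2)]
  change (ePt i).1.submodule ≤ W ↔ _
  rw [ePt_le, h, kdot_toV, phi'_eq_zero]
  rfl

theorem hermitianBlocks_eq : hermitianBlocks = gBlk '' {m | m ∈ blkL} := by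
  ext b
  constructor
  · rintro ⟨W, hW, hb, hc⟩
    obtain ⟨a, ha, h⟩ := (line_eq W).1 hW
    rw [line_gBlk W a h] at hb
    subst hb
    rcases mask_complete _ (masks_eq ▸ List.mem_map.2 ⟨a, (mem_normL a).2 ha, rfl⟩) with h1 | h1
    · exact ⟨_, h1, rfl⟩
    · exfalso
      obtain ⟨k, hk, hk'⟩ := List.mem_map.1 (fst_pow _ h1)
      have hk : k < 65 := by simpa using hk
      rw [ncard_gBlk] at hc
      have : bitsF (maskL a ptL) = {⟨k, hk⟩} := by
        have h3 : maskL a ptL = 2 ^ k := hk'.symm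
        rw [h3]
        ext i
        simp only [bitsF, Finset.mem_filter, Finset.mem_univ, true_and, Finset.mem_singleton,
          Nat.testBit_two_pow, decide_eq_true_eq, Fin.ext_iff]
        exact eq_comm
      rw [this, Finset.card_singleton] at hc
      omega
  · rintro ⟨m, hm, rfl⟩
    have hm : m ∈ blkL := hm
    obtain ⟨a, ha, hma⟩ := List.mem_map.1 (masks_eq.symm ▸ blk_sub_mask m hm)
    have hn := (mem_normL a).1 ha
    refine ⟨LinearMap.ker (kdotL (toV a)), (line_eq _).2 ⟨a, hn, fun v => ?_⟩, ?_, ?_⟩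
    · rw [LinearMap.mem_ker]
      rfl
    · rw [line_gBlk _ a (fun v => by rw [LinearMap.mem_ker]; rfl), hma]
    · rw [ncard_gBlk, card_bitsF m hm]

theorem testBit_blk_ge (m : ℕ) (hm : m ∈ blkL) (i : ℕ) (hi : ¬ i < 65) : m.testBit i = false :=
  Nat.testBit_lt_two_pow
    (lt_of_lt_of_le (blkL_lt m hm) (Nat.pow_le_pow_right (by norm_num) (by omega)))

theorem gBlk_injOn : Set.InjOn gBlk {m | m ∈ blkL} := by
  intro m hm m' hm' h
  apply Nat.eq_of_testBit_eq
  intro i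
  by_cases hi : i < 65
  · have h1 := mem_gBlk m ⟨i, hi⟩
    rw [h, mem_gBlk] at h1
    exact (Bool.eq_iff_iff.2 h1).symm
  · rw [testBit_blk_ge m hm i hi, testBit_blk_ge m' hm' i hi]

theorem gBlk_disjoint (m m' : ℕ) (hm : m ∈ blkL) : Disjoint (gBlk m) (gBlk m') ↔ m &&& m' = 0 := by
  rw [land_eq_zero_iff, Set.disjoint_left]
  constructor
  · rintro h i ⟨h1, h2⟩
    by_cases hi : i < 65
    · exact h ((mem_gBlk m ⟨i, hi⟩).2 h1) ((mem_gBlk m' ⟨i, hi⟩).2 h2)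
    · rw [testBit_blk_ge m hm i hi] at h1
      exact absurd h1 (by simp)
  · intro h x hx hx'
    obtain ⟨i, rfl⟩ := ePt.surjective x
    exact h i.1 ⟨(mem_gBlk _ _).1 hx, (mem_gBlk _ _).1 hx'⟩

theorem isSol_card (T : Finset ℕ) (h : IsSol 0 T) : T.card = 13 := by
  classical
  have hU : (Finset.univ : Finset (Fin 65)) = T.biUnion bitsF := by
    ext i
    simp only [Finset.mem_univ, Finset.mem_biUnion, true_iff]
    obtain ⟨m, hm, hb⟩ := (h.2.2 i.1 i.2).resolve_left (by simp)
    exact ⟨m, hm, by simp [bitsF, hb]⟩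
  have hc := congrArg Finset.card hU
  rw [Finset.card_biUnion, Finset.sum_congr rfl (fun m hm => card_bitsF m (h.1 m hm).1),
    Finset.sum_const, Finset.card_univ, Fintype.card_fin, smul_eq_mul] at hc
  · omega
  · intro m hm m' hm' hne
    rw [Function.onFun, Finset.disjoint_left]
    intro i hi hi'
    simp only [bitsF, Finset.mem_filter, Finset.mem_univ, true_and] at hi hi'
    exact (land_eq_zero_iff _ _).1 (h.2.1 m hm m' hm' hne) i.1 ⟨hi, hi'⟩

theorem classes_eq : {C : Set (Set ↥HermitianSet) | C ⊆ hermitianBlocks ∧ C.ncard = 13 ∧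
      C.Pairwise Disjoint ∧ ⋃₀ C = Set.univ} =
    (fun T : Finset ℕ => gBlk '' (T : Set ℕ)) '' (solF 0 : Set (Finset ℕ)) := by
  ext C
  constructor
  · rintro ⟨hsub, -, hpw, hcov⟩
    rw [hermitianBlocks_eq] at hsub
    have hfin : {m | m ∈ blkL ∧ gBlk m ∈ C}.Finite :=
      (List.finite_toSet blkL).subset (fun m hm => hm.1)
    have himg : gBlk '' (hfin.toFinset : Set ℕ) = C := by
      ext b
      constructor
      · rintro ⟨m, hm, rfl⟩
        rw [Set.Finite.coe_toFinset] at hm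
        exact hm.2
      · intro hb
        obtain ⟨m, hm, rfl⟩ := hsub hb
        refine ⟨m, ?_, rfl⟩
        rw [Set.Finite.coe_toFinset]
        exact ⟨hm, hb⟩
    refine ⟨hfin.toFinset, ?_, himg⟩
    rw [Finset.mem_coe, mem_solF]
    refine ⟨?_, ?_, ?_⟩
    · intro m hm
      rw [Set.Finite.mem_toFinset] at hm
      exact ⟨hm.1, Nat.and_zero m⟩
    · intro m hm m' hm' hne
      rw [Set.Finite.mem_toFinset] at hm hm'
      rw [← gBlk_disjoint m m' hm.1]
      exact hpw hm.2 hm'.2 (fun h => hne (gBlk_injOn hm.1 hm'.1 h))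
    · intro i hi
      right
      have : ePt ⟨i, hi⟩ ∈ ⋃₀ C := by rw [hcov]; trivial
      obtain ⟨b, hb, hib⟩ := this
      obtain ⟨m, hm, rfl⟩ := hsub hb
      refine ⟨m, ?_, (mem_gBlk _ _).1 hib⟩
      rw [Set.Finite.mem_toFinset]
      exact ⟨hm, hb⟩
  · rintro ⟨T, hT, rfl⟩
    rw [Finset.mem_coe, mem_solF] at hT
    have hTb : (T : Set ℕ) ⊆ {m | m ∈ blkL} := fun m hm => (hT.1 m hm).1
    refine ⟨?_, ?_, ?_, ?_⟩
    · rw [hermitianBlocks_eq]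
      exact Set.image_mono hTb
    · change (gBlk '' (T : Set ℕ)).ncard = 13
      rw [Set.InjOn.ncard_image (gBlk_injOn.mono hTb), Set.ncard_coe_finset, isSol_card T hT]
    · rintro _ ⟨m, hm, rfl⟩ _ ⟨m', hm', rfl⟩ hne
      rw [gBlk_disjoint m m' (hTb hm)]
      exact hT.2.1 m hm m' hm' (fun h => hne (by rw [h]))
    · rw [Set.eq_univ_iff_forall]
      intro x
      obtain ⟨i, rfl⟩ := ePt.surjective x
      obtain ⟨m, hm, hb⟩ := (hT.2.2 i.1 i.2).resolve_left (by simp)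
      exact ⟨gBlk m, ⟨m, hm, rfl⟩, (mem_gBlk _ _).2 hb⟩

/-- The Hermitian unital design of order 4 has exactly 4304 parallel classes, a parallel
class being a set of 13 pairwise disjoint blocks whose union is the whole point set. -/
theorem hermitian_unital_design_parallel_class_count :
    {C : Set (Set ↥HermitianSet) | C ⊆ hermitianBlocks ∧ C.ncard = 13 ∧
      C.Pairwise Disjoint ∧ ⋃₀ C = Set.univ}.ncard = 4304 := by
  rw [classes_eq, Set.InjOn.ncard_image, Set.ncard_coe_finset, card_solF_zero]
  intro T hT T' hT' h
  rw [Finset.mem_coe, mem_solF] at hT hT'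
  have hTb : (T : Set ℕ) ⊆ {m | m ∈ blkL} := fun m hm => (hT.1 m hm).1
  have hTb' : (T' : Set ℕ) ⊆ {m | m ∈ blkL} := fun m hm => (hT'.1 m hm).1
  exact Finset.coe_injective ((gBlk_injOn.image_eq_image_iff hTb hTb').1 h)
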